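/- arXiv:2008.07136 — 6 statements merged into one kernel-verified Lean document; each statement's English description precedes it below -/
import Mathlib

section
/- Let K be a field of characteristic p containing F_q, complete with respect to a nontrivial nonarchimedean absolute value ‖·‖. Let p(X) ∈ F_q[X] be monic irreducible of degree d with pairwise distinct roots ζ_1, …, ζ_d ∈ K satisfying ‖ζ_k‖ ≤ 1. Let (c_i)_{i≥0} be a sequence in K with c_i → 0, and suppose f_0, …, f_{d−1} ∈ K satisfy Σ'_{i≥0} c_i ζ_k^i = Σ_{l=0}^{d−1} f_l ζ_k^l for every k = 1, …, d. Then for every map 𝔣 : K → K of the form 𝔣(x) = Σ_{j=0}^{m} b_j x^{q^j} with b_0, …, b_m ∈ K, one has Σ'_{i≥0} 𝔣(c_i) ζ_k^i = Σ_{l=0}^{d−1} 𝔣(f_l) ζ_k^l for every k = 1, …, d. -/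
open Filter

/-- Let `K` be a complete nontrivially-valued nonarchimedean field of
characteristic `p` containing `F_q` (embedding `φ`), `P ∈ F_q[X]` monic irreducible of degree
`d` with pairwise distinct roots `ζ 1, …, ζ d ∈ K` of norm `≤ 1`. Let `(c i)` be a null
sequence in `K` and suppose `f 0, …, f (d-1)` satisfy `∑' i, c i * ζ k ^ i = ∑ l, f l * ζ k ^ l`
for every `k`. Then for every twisted polynomial map `x ↦ ∑ j, b j * x ^ (q ^ j)` the same
interpolation holds with all coefficients replaced by their images. -/
theorem stmt1 (p e q : ℕ) [Fact p.Prime] (he : e ≠ 0) (hq : q = p ^ e)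
    (K : Type*) [NontriviallyNormedField K] [CompleteSpace K] [IsUltrametricDist K]
    [CharP K p] (φ : GaloisField p e →+* K)
    (d : ℕ) (P : Polynomial (GaloisField p e))
    (hmonic : P.Monic) (hirr : Irreducible P) (hdeg : P.natDegree = d)
    (ζ : Fin d → K) (hinj : Function.Injective ζ)
    (hroot : ∀ k, Polynomial.eval (ζ k) (P.map φ) = 0)
    (hnorm : ∀ k, ‖ζ k‖ ≤ 1)
    (c : ℕ → K) (hc : Tendsto c atTop (nhds 0))
    (f : Fin d → K)
    (hf : ∀ k, ∑' i : ℕ, c i * ζ k ^ i = ∑ l : Fin d, f l * ζ k ^ (l : ℕ))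
    (m : ℕ) (b : Fin (m + 1) → K) :
    ∀ k, ∑' i : ℕ, (∑ j : Fin (m + 1), b j * c i ^ q ^ (j : ℕ)) * ζ k ^ i
        = ∑ l : Fin d, (∑ j : Fin (m + 1), b j * f l ^ q ^ (j : ℕ)) * ζ k ^ (l : ℕ) := by
  classical
  have hp : p.Prime := Fact.out
  haveI : ExpChar K p := ExpChar.prime hp
  haveI : Fintype (GaloisField p e) := Fintype.ofFinite _
  have hcard : Fintype.card (GaloisField p e) = q := by
    rw [hq, ← GaloisField.card p e he, Nat.card_eq_fintype_card]
  have hq0 : q ≠ 0 := by rw [hq]; exact pow_ne_zero _ hp.ne_zero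
  have hPm : (P.map φ).Monic := hmonic.map φ
  have hPd : (P.map φ).natDegree = d := by rw [Polynomial.natDegree_map, hdeg]
  -- every root of `P` is one of the `ζ k`
  have hall : ∀ x : K, Polynomial.eval x (P.map φ) = 0 → ∃ k, ζ k = x := by
    intro x hx
    by_contra! hne
    have hsub : insert x (Finset.univ.image ζ) ⊆ (P.map φ).roots.toFinset := by
      intro y hy
      rw [Multiset.mem_toFinset, Polynomial.mem_roots hPm.ne_zero]
      rcases Finset.mem_insert.1 hy with rfl | hy
      · exact hx
      · obtain ⟨k, -, rfl⟩ := Finset.mem_image.1 hy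
        exact hroot k
    have h1 := Finset.card_le_card hsub
    rw [Finset.card_insert_of_notMem (by simpa using hne),
      Finset.card_image_of_injective _ hinj, Finset.card_univ, Fintype.card_fin] at h1
    have h2 := Multiset.toFinset_card_le (P.map φ).roots
    have h3 := Polynomial.card_roots' (P.map φ)
    omega
  have hfrob : ∀ k, ∃ k', ζ k' = ζ k ^ q := by
    intro k
    apply hall
    have h := hroot k
    rw [Polynomial.eval_map] at h ⊢
    have h2 : Polynomial.eval₂ φ (ζ k) (Polynomial.expand _ q P) = 0 := by
      rw [← hcard, FiniteField.expand_card, Polynomial.eval₂_pow, h, hcard, zero_pow hq0]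
    rwa [Polynomial.expand_eq_comp_X_pow, Polynomial.eval₂_comp, Polynomial.eval₂_X_pow] at h2
  choose σ hσ using hfrob
  have hpowinj : ∀ j : ℕ, ∀ x y : K, x ^ q ^ j = y ^ q ^ j → x = y := by
    intro j x y h
    rw [hq, ← pow_mul] at h
    exact (iterateFrobenius K p (e * j)).injective h
  have hσs : Function.Surjective σ := by
    apply Finite.surjective_of_injective
    intro a a' h
    apply hinj
    apply hpowinj 1
    rw [pow_one, ← hσ, ← hσ, h]
  have hσj : ∀ j : ℕ, ∀ k, ζ (σ^[j] k) = ζ k ^ q ^ j := by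
    intro j
    induction j with
    | zero => intro k; simp
    | succ j ih => intro k; rw [Function.iterate_succ_apply', hσ, ih, ← pow_mul, pow_succ]
  have hsum : ∀ k, Summable fun i => c i * ζ k ^ i := by
    intro k
    apply NonarchimedeanAddGroup.summable_of_tendsto_cofinite_zero
    rw [Nat.cofinite_eq_atTop]
    refine squeeze_zero_norm (a := fun i => ‖c i‖) (fun i => ?_) (by simpa using hc.norm)
    rw [norm_mul, norm_pow]
    exact mul_le_of_le_one_right (norm_nonneg _) (pow_le_one₀ (norm_nonneg _) (hnorm k))
  have key : ∀ j : ℕ, ∀ k, HasSum (fun i => c i ^ q ^ j * ζ k ^ i)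
      (∑ l : Fin d, f l ^ q ^ j * ζ k ^ (l : ℕ)) := by
    intro j k
    obtain ⟨k', rfl⟩ := (hσs.iterate j) k
    have h := (hsum k').hasSum
    rw [hf] at h
    have hF : ∀ x : K, iterateFrobenius K p (e * j) x = x ^ q ^ j := by
      intro x; rw [iterateFrobenius_def, hq, ← pow_mul]
    have hcont : Continuous (iterateFrobenius K p (e * j)) := by
      rw [show (⇑(iterateFrobenius K p (e * j)) : K → K) = fun x => x ^ q ^ j from funext hF]
      fun_prop
    have h2 := h.map (iterateFrobenius K p (e * j)) hcont
    convert h2 using 1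
    · funext i
      rw [Function.comp_apply, map_mul, map_pow, hF, hF, hσj]
    · rw [map_sum]
      refine Finset.sum_congr rfl fun l _ => ?_
      rw [map_mul, map_pow, hF, hF, hσj]
  intro k
  have h := hasSum_sum (s := Finset.univ)
    (fun (j : Fin (m + 1)) _ => (key j k).mul_left (b j))
  have h3 := h.tsum_eq
  simp only [Finset.sum_mul, mul_assoc]
  rw [h3, Finset.sum_comm]
  simp only [Finset.mul_sum]
end

section
/- Let K be a field of characteristic p containing F_q, complete with respect to a nontrivial nonarchimedean absolute value ‖·‖. Let 𝔭(t) ∈ F_q[t] be monic irreducible of degree d with pairwise distinct roots ζ_1, …, ζ_d ∈ K satisfying ‖ζ_k‖ ≤ 1, and let n ≥ 0. Let F : K → K be given by F(x) = Σ_{j=0}^{s} b_j x^{q^j} with b_0, …, b_s ∈ K. Let (h_i)_{i≥0} ⊆ K with h_i → 0, and suppose that Σ_{i≥0} F(h_i) t^i = 𝔭(t)^{n+1} · Σ_{i≥0} h_i t^i as formal power series in K[[t]] (where 𝔭(t)^{n+1} has coefficients in F_q ⊆ K). If c_0, …, c_{d−1} ∈ K satisfy Σ'_{i≥n} C(i,n)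 h_i ζ_k^{i−n} = Σ_{l=0}^{d−1} c_l ζ_k^l for every k = 1, …, d, then F(c_l) = 0 for every l = 0, …, d−1. -/
open Filter

namespace Stmt7Aux

open Polynomial

lemma summable_aux {K : Type*} [NontriviallyNormedField K] [CompleteSpace K] [IsUltrametricDist K]
    (h : ℕ → K) (hh : Tendsto h atTop (nhds 0)) (u : ℕ → K) (hu : ∀ i, ‖u i‖ ≤ 1) :
    Summable (fun i => u i * h i) := by
  apply NonarchimedeanAddGroup.summable_of_tendsto_cofinite_zero
  rw [Nat.cofinite_eq_atTop]
  refine squeeze_zero_norm (a := fun i => ‖h i‖) (fun i => ?_) (by simpa using hh.norm)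
  rw [norm_mul]
  exact mul_le_of_le_one_left (norm_nonneg _) (hu i)

/-- coefficient `l` of the reduction of the hyperderivative. -/
noncomputable def L {k : Type*} [Field k] (P : k[X]) (n l : ℕ) : k[X] →ₗ[k] k :=
  (lcoeff k l).comp ((modByMonicHom P).comp (hasseDeriv n))

lemma L_apply {k : Type*} [Field k] (P : k[X]) (n l : ℕ) (f : k[X]) :
    L P n l f = (hasseDeriv n f %ₘ P).coeff l := rfl

lemma dvd_hasse {k : Type*} [Field k] (P : k[X]) (n : ℕ) : ∀ g : k[X],
    P ∣ hasseDeriv n (P ^ (n + 1) * g) := by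
  induction n using Nat.strong_induction_on with
  | _ n ih =>
    intro g
    rw [show P ^ (n + 1) * g = P * (P ^ n * g) by ring, hasseDeriv_mul]
    refine Finset.dvd_sum fun ij hij => ?_
    rw [Finset.HasAntidiagonal.mem_antidiagonal] at hij
    obtain ⟨i, j⟩ := ij
    simp only at hij ⊢
    rcases i with _ | i
    · rw [hasseDeriv_zero']
      exact Dvd.intro _ rfl
    · apply Dvd.dvd.mul_left
      have h2 := ih j (by omega) (P ^ i * g)
      rwa [← mul_assoc, ← pow_add, show j + 1 + i = n by omega] at h2

lemma L_zero {k : Type*} [Field k] (P : k[X]) (hP : P.Monic) (n l : ℕ) (g : k[X]) :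
    L P n l (P ^ (n + 1) * g) = 0 := by
  have := dvd_hasse P n g
  rw [← modByMonic_eq_zero_iff_dvd hP] at this
  rw [L_apply, this, coeff_zero]

lemma norm_le_one {p e : ℕ} [Fact p.Prime] (he : e ≠ 0) {K : Type*} [NontriviallyNormedField K]
    (φ : GaloisField p e →+* K) (x : GaloisField p e) : ‖φ x‖ ≤ 1 := by
  by_cases hx : x = 0
  · simp [hx]
  · have : IsOfFinOrder (φ x) := by
      have h1 : IsOfFinOrder (Units.mk0 x hx) := isOfFinOrder_of_finite _
      have h2 := (Units.coeHom _).isOfFinOrder h1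
      exact (φ : GaloisField p e →* K).isOfFinOrder h2
    exact this.norm_eq_one.le

lemma pow_q {p e : ℕ} [Fact p.Prime] (he : e ≠ 0) (x : GaloisField p e) (j : ℕ) :
    x ^ (p ^ e) ^ j = x := by
  haveI := Fintype.ofFinite (GaloisField p e)
  have h : Fintype.card (GaloisField p e) = p ^ e := by
    rw [← Nat.card_eq_fintype_card, GaloisField.card p e he]
  rw [← h]
  exact FiniteField.pow_card_pow j x

lemma L_sum {k : Type*} [Field k] (P Q : k[X]) (n l j : ℕ) :
    ∑ m ∈ Finset.range (Q.natDegree + 1), Q.coeff m * L P n l (X ^ (j + m)) =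
      L P n l (Q * X ^ j) := by
  conv_rhs => rw [Q.as_sum_range_C_mul_X_pow, Finset.sum_mul, map_sum]
  refine Finset.sum_congr rfl fun m _ => ?_
  rw [mul_assoc, ← pow_add, ← smul_eq_C_mul, map_smul, smul_eq_mul, add_comm j m]

lemma coeff_formula {k K : Type*} [Field k] [Field K] (φ : k →+* K) (Q : k[X]) (h : ℕ → K) (i : ℕ) :
    PowerSeries.coeff i ((↑(Q.map φ) : PowerSeries K) * PowerSeries.mk h) =
      ∑ m ∈ Finset.range (Q.natDegree + 1), φ (Q.coeff m) * (if m ≤ i then h (i - m) else 0) := by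
  have : (↑(Q.map φ) : PowerSeries K) = ∑ m ∈ Finset.range (Q.natDegree + 1),
      PowerSeries.C (φ (Q.coeff m)) * PowerSeries.X ^ m := by
    conv_lhs => rw [Q.as_sum_range_C_mul_X_pow]
    rw [Polynomial.map_sum]
    rw [← Polynomial.coeToPowerSeries.ringHom_apply, map_sum]
    simp
  rw [this, Finset.sum_mul, map_sum]
  refine Finset.sum_congr rfl fun m _ => ?_
  rw [mul_assoc, PowerSeries.coeff_C_mul, PowerSeries.coeff_X_pow_mul']
  simp

end Stmt7Aux

/-- Let `K` be a complete nontrivially-valued nonarchimedean field of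
characteristic `p` containing `F_q` (embedding `φ`).  Let `P ∈ F_q[t]` be monic irreducible
of degree `d` with pairwise distinct roots `ζ 1, …, ζ d ∈ K` of norm `≤ 1`, and `n ≥ 0`.
Let `F x = ∑_{j ≤ s} b j * x ^ (q ^ j)` and let `(h i)` be a null sequence with
`∑ F(h i) t^i = P(t)^{n+1} * ∑ h i t^i` in `K[[t]]`.  If `c 0, …, c (d-1)` interpolate the
values at the roots of the `n`-th hyperderivative, then `F (c l) = 0` for all `l`. -/
theorem stmt7 (p e q : ℕ) [Fact p.Prime] (he : e ≠ 0) (hq : q = p ^ e)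
    (K : Type*) [NontriviallyNormedField K] [CompleteSpace K] [IsUltrametricDist K]
    [CharP K p] (φ : GaloisField p e →+* K)
    (d : ℕ) (P : Polynomial (GaloisField p e))
    (hmonic : P.Monic) (hirr : Irreducible P) (hdeg : P.natDegree = d)
    (ζ : Fin d → K) (hinj : Function.Injective ζ)
    (hroot : ∀ k, Polynomial.eval (ζ k) (P.map φ) = 0)
    (hnormζ : ∀ k, ‖ζ k‖ ≤ 1)
    (n s : ℕ) (b : Fin (s + 1) → K)
    (F : K → K) (hF : ∀ x, F x = ∑ j : Fin (s + 1), b j * x ^ q ^ (j : ℕ))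
    (h : ℕ → K) (hh : Tendsto h atTop (nhds 0))
    (heq : PowerSeries.mk (fun i => F (h i))
        = (↑(P.map φ) : PowerSeries K) ^ (n + 1) * PowerSeries.mk h)
    (c : Fin d → K)
    (hc : ∀ k, ∑' i : ℕ, ((i + n).choose n : K) * h (i + n) * ζ k ^ i
        = ∑ l : Fin d, c l * ζ k ^ (l : ℕ)) :
    ∀ l, F (c l) = 0 := by
  classical
  subst hdeg
  have hP0 : P.natDegree ≠ 0 := hirr.natDegree_pos.ne'
  let G : K →+ K :=
    { toFun := F
      map_zero' := by
        rw [hF]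
        refine Finset.sum_eq_zero fun j _ => ?_
        have : q ^ (j : ℕ) ≠ 0 := by
          rw [hq]
          exact pow_ne_zero _ (pow_ne_zero _ (Fact.out : p.Prime).ne_zero)
        rw [zero_pow this, mul_zero]
      map_add' := fun x y => by
        rw [hF, hF, hF, ← Finset.sum_add_distrib]
        refine Finset.sum_congr rfl fun j _ => ?_
        rw [hq, ← pow_mul, add_pow_char_pow, mul_add] }
  have hGF : ∀ x, G x = F x := fun x => rfl
  have hFc : Continuous F := by
    rw [show F = fun x => ∑ j : Fin (s + 1), b j * x ^ q ^ (j : ℕ) from funext hF]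
    fun_prop
  have hFl : ∀ (r : GaloisField p e) x, F (φ r * x) = φ r * F x := by
    intro r x
    rw [hF, hF, Finset.mul_sum]
    refine Finset.sum_congr rfl fun j _ => ?_
    rw [mul_pow, ← map_pow, hq, Stmt7Aux.pow_q he]
    ring
  let r : ℕ → ℕ → GaloisField p e := fun l i => Stmt7Aux.L P n l (Polynomial.X ^ i)
  have hsum : ∀ l m, Summable (fun i => φ (r l (i + m)) * h i) := fun l m =>
    Stmt7Aux.summable_aux h hh _ (fun i => Stmt7Aux.norm_le_one he φ _)
  have hcl : ∀ l : Fin P.natDegree, c l = ∑' i, φ (r l i) * h i := by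
    have : (fun l : Fin P.natDegree => (∑' i, φ (r l i) * h i) - c l) = 0 := by
      apply Matrix.eq_zero_of_forall_index_sum_mul_pow_eq_zero hinj
      intro k
      simp only [sub_mul, Finset.sum_sub_distrib]
      rw [← hc k, sub_eq_zero]
      have h1 : HasSum (fun i => ∑ l : Fin P.natDegree, φ (r l i) * h i * ζ k ^ (l : ℕ))
          (∑ l : Fin P.natDegree, (∑' i, φ (r l i) * h i) * ζ k ^ (l : ℕ)) :=
        hasSum_sum fun l _ => ((hsum l 0).hasSum.mul_right _)
      have h2 : ∀ i, ∑ l : Fin P.natDegree, φ (r l i) * h i * ζ k ^ (l : ℕ)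
          = (i.choose n : K) * h i * ζ k ^ (i - n) := by
        intro i
        have h3 : Polynomial.eval₂ φ (ζ k) (Polynomial.hasseDeriv n (Polynomial.X ^ i))
            = (i.choose n : K) * ζ k ^ (i - n) := by
          rw [← Polynomial.monomial_one_right_eq_X_pow, Polynomial.hasseDeriv_monomial]
          simp
        have h4 : Polynomial.eval₂ φ (ζ k) (Polynomial.hasseDeriv n (Polynomial.X ^ i))
            = ∑ l : Fin P.natDegree, φ (r l i) * ζ k ^ (l : ℕ) := by
          rw [← Polynomial.eval₂_modByMonic_eq_self_of_root
            (by rw [Polynomial.eval₂_eq_eval_map]; exact hroot k)]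
          rw [Polynomial.eval₂_eq_sum_range' φ (n := P.natDegree)
            (Polynomial.natDegree_modByMonic_lt _ hmonic (fun h => hP0 (by simp [h]))),
            Finset.sum_range]
          rfl
        rw [mul_right_comm, ← h3, h4, Finset.sum_mul]
        exact Finset.sum_congr rfl fun l _ => by ring
      simp only [h2] at h1
      have h5 : HasSum (fun i : ℕ => ((i + n).choose n : K) * h (i + n) * ζ k ^ i)
          (∑ l : Fin P.natDegree, (∑' i, φ (r l i) * h i) * ζ k ^ (l : ℕ)) := by
        rw [← (add_left_injective n).hasSum_iff] at h1
        · simpa [Function.comp_def] using h1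
        · intro i hi
          have : i < n := by
            by_contra hlt
            exact hi ⟨i - n, by simp; omega⟩
          simp [Nat.choose_eq_zero_of_lt this]
      exact h5.tsum_eq.symm
    intro l
    exact (sub_eq_zero.mp (congrFun this l)).symm
  intro l
  have hA : HasSum (fun i => φ (r l i) * F (h i)) (F (c l)) := by
    have := ((hsum l 0).hasSum).map G hFc
    simp only [add_zero, ← hcl] at this
    convert this using 2 with i
    · exact (hFl _ _).symm
    · rfl
  have hco : ∀ i, F (h i) = ∑ m ∈ Finset.range ((P ^ (n + 1)).natDegree + 1),
      φ ((P ^ (n + 1)).coeff m) * (if m ≤ i then h (i - m) else 0) := by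
    intro i
    rw [← Stmt7Aux.coeff_formula, Polynomial.map_pow, Polynomial.coe_pow, ← heq,
      PowerSeries.coeff_mk]
  have hB : HasSum (fun i => ∑ m ∈ Finset.range ((P ^ (n + 1)).natDegree + 1),
      φ ((P ^ (n + 1)).coeff m) * (φ (r l i) * (if m ≤ i then h (i - m) else 0)))
      (∑ m ∈ Finset.range ((P ^ (n + 1)).natDegree + 1),
      φ ((P ^ (n + 1)).coeff m) * ∑' j, φ (r l (j + m)) * h j) := by
    refine hasSum_sum fun m _ => HasSum.mul_left _ ?_
    rw [← (add_left_injective m).hasSum_iff]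
    · simpa [Function.comp_def] using (hsum l m).hasSum
    · intro i hi
      have : ¬ m ≤ i := fun hle => hi ⟨i - m, by simp; omega⟩
      simp [this]
  have hC : HasSum (fun j => ∑ m ∈ Finset.range ((P ^ (n + 1)).natDegree + 1),
      φ ((P ^ (n + 1)).coeff m) * (φ (r l (j + m)) * h j))
      (∑ m ∈ Finset.range ((P ^ (n + 1)).natDegree + 1),
      φ ((P ^ (n + 1)).coeff m) * ∑' j, φ (r l (j + m)) * h j) :=
    hasSum_sum fun m _ => (hsum l m).hasSum.mul_left _
  have hz : ∀ j, ∑ m ∈ Finset.range ((P ^ (n + 1)).natDegree + 1),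
      φ ((P ^ (n + 1)).coeff m) * (φ (r l (j + m)) * h j) = 0 := by
    intro j
    have := Stmt7Aux.L_sum P (P ^ (n + 1)) n l j
    rw [Stmt7Aux.L_zero P hmonic] at this
    have h2 := congrArg (fun x => φ x * h j) this
    simp only [map_sum, map_mul, map_zero, zero_mul, Finset.sum_mul, mul_assoc] at h2
    exact h2
  simp only [hz] at hC
  have hAB := hA.unique (by
    convert hB using 2 with i
    rw [hco i, Finset.mul_sum]
    exact Finset.sum_congr rfl fun m _ => by ring)
  rw [hAB]
  exact hC.unique hasSum_zero
end

section
/- Let K be a field of characteristic p containing F_q, complete with respect to a nontrivial nonarchimedean absolute value ‖·‖, let θ ∈ K with ‖θ‖ > 1, and let (c_m)_{m≥0} ⊆ K be a sequence with ‖c_m‖ · ‖θ‖^{−q^m} → 0 as m → ∞. Then for each i ≥ 0 the sum h_i := Σ'_{m≥0} c_m θ^{−(i+1)q^m} converges, the sequence (h_i) tends to 0, and for every z ∈ K with ‖z‖ ≤ 1 and every n ≥ 0 one has Σ'_{i≥n} C(i,n) h_i z^{i−n} = Σ'_{m≥0} c_m (θ^{q^m} − z)^{−(n+1)}. In particular (n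 = 0), Σ'_{i≥0} h_i z^i = Σ'_{m≥0} c_m (θ^{q^m} − z)^{−1}. -/
open Filter

theorem aux_summable (K : Type*) [NontriviallyNormedField K] [CompleteSpace K]
    [IsUltrametricDist K] (q : ℕ) (hq : 0 < q) (θ : K) (hθ : 1 < ‖θ‖) (c : ℕ → K)
    (hc : Tendsto (fun m : ℕ => ‖c m‖ * (‖θ‖ ^ q ^ m)⁻¹) atTop (nhds 0))
    (z : K) (hz : ‖z‖ ≤ 1) (n : ℕ) :
    Summable (fun x : ℕ × ℕ => ((x.1 + n).choose n : K)
      * (c x.2 * (θ ^ ((x.1 + n + 1) * q ^ x.2))⁻¹) * z ^ x.1) := by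
  apply NonarchimedeanAddGroup.summable_of_tendsto_cofinite_zero
  have hr : Tendsto (fun i : ℕ => (‖θ‖⁻¹) ^ i) cofinite (nhds 0) := by
    rw [Nat.cofinite_eq_atTop]
    exact tendsto_pow_atTop_nhds_zero_of_lt_one (by positivity) (inv_lt_one_of_one_lt₀ hθ)
  rw [← Nat.cofinite_eq_atTop] at hc
  have h := tendsto_mul_cofinite_nhds_zero hr hc
  refine squeeze_zero_norm (fun x => ?_) h
  obtain ⟨i, m⟩ := x
  have h0 : (0 : ℝ) < ‖θ‖ := by linarith
  have h1 : ‖((i + n).choose n : K)‖ ≤ 1 := IsUltrametricDist.norm_natCast_le_one K _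
  have h2 : ‖z‖ ^ i ≤ 1 := pow_le_one₀ (norm_nonneg _) hz
  have h3 : (‖θ‖ ^ ((i + n + 1) * q ^ m))⁻¹ ≤ (‖θ‖ ^ (i + q ^ m))⁻¹ := by
    apply inv_anti₀ (by positivity)
    apply pow_le_pow_right₀ hθ.le
    have : 1 ≤ q ^ m := Nat.one_le_pow _ _ hq
    nlinarith [Nat.zero_le (n * q ^ m), Nat.mul_le_mul_left i this]
  simp only [norm_mul, norm_inv, norm_pow]
  calc _ ≤ 1 * (‖c m‖ * (‖θ‖ ^ (i + q ^ m))⁻¹) * 1 := by gcongr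
    _ = _ := by rw [pow_add, mul_inv, inv_pow]; ring

/-- **Pellarin's identity and its hyperderivatives.** Let `K` be a complete
nontrivially-valued nonarchimedean field of characteristic `p` containing `F_q`
(embedding `φ`), `q = p ^ e`, let `θ ∈ K` with `‖θ‖ > 1`, and `(c m)` a sequence with
`‖c m‖ * ‖θ‖^{-q^m} → 0`.  Then each `h i := ∑'_m c m * θ^{-(i+1) q^m}` converges, `h i → 0`,
and for every `‖z‖ ≤ 1` and `n ≥ 0`:
`∑'_{i} C(i+n,n) h_{i+n} z^i = ∑'_m c m * (θ^{q^m} - z)^{-(n+1)}`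
(the case `n = 0` being `∑'_i h_i z^i = ∑'_m c_m (θ^{q^m} - z)⁻¹`). -/
theorem stmt9 (p e q : ℕ) [Fact p.Prime] (he : e ≠ 0) (hq : q = p ^ e)
    (K : Type*) [NontriviallyNormedField K] [CompleteSpace K] [IsUltrametricDist K]
    [CharP K p] (φ : GaloisField p e →+* K)
    (θ : K) (hθ : 1 < ‖θ‖)
    (c : ℕ → K)
    (hc : Tendsto (fun m : ℕ => ‖c m‖ * (‖θ‖ ^ q ^ m)⁻¹) atTop (nhds 0)) :
    (∀ i : ℕ, Summable fun m : ℕ => c m * (θ ^ ((i + 1) * q ^ m))⁻¹) ∧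
    Tendsto (fun i : ℕ => ∑' m : ℕ, c m * (θ ^ ((i + 1) * q ^ m))⁻¹) atTop (nhds 0) ∧
    ∀ z : K, ‖z‖ ≤ 1 → ∀ n : ℕ,
      ∑' i : ℕ, ((i + n).choose n : K)
          * (∑' m : ℕ, c m * (θ ^ ((i + n + 1) * q ^ m))⁻¹) * z ^ i
        = ∑' m : ℕ, c m * ((θ ^ q ^ m - z) ^ (n + 1))⁻¹ := by
  have hq0 : 0 < q := hq ▸ pow_pos (Fact.out : p.Prime).pos e
  have key := aux_summable K q hq0 θ hθ c hc
  have k1 := key 1 (by simp) 0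
  simp only [Nat.choose_zero_right, Nat.cast_one, one_mul, one_pow, mul_one, add_zero] at k1
  refine ⟨fun i => k1.prod_factor i, k1.prod.tendsto_atTop_zero, fun z hz n => ?_⟩
  have k := key z hz n
  have hcomm := Summable.tsum_comm (f := fun m i : ℕ => ((i + n).choose n : K)
    * (c m * (θ ^ ((i + n + 1) * q ^ m))⁻¹) * z ^ i) k.prod_symm
  have hθ0 : θ ≠ 0 := norm_pos_iff.1 (by linarith)
  calc _ = ∑' i : ℕ, ∑' m : ℕ, ((i + n).choose n : K)
      * (c m * (θ ^ ((i + n + 1) * q ^ m))⁻¹) * z ^ i := by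
        simp only [tsum_mul_left, tsum_mul_right]
    _ = ∑' m : ℕ, ∑' i : ℕ, ((i + n).choose n : K)
      * (c m * (θ ^ ((i + n + 1) * q ^ m))⁻¹) * z ^ i := hcomm
    _ = _ := by
      refine tsum_congr fun m => ?_
      have hm : θ ^ q ^ m ≠ 0 := pow_ne_zero _ hθ0
      have hlt : 1 < ‖θ ^ q ^ m‖ := by
        rw [norm_pow]; exact one_lt_pow₀ hθ (pow_pos hq0 m).ne'
      have hx : ‖z / θ ^ q ^ m‖ < 1 := by
        rw [norm_div, div_lt_one (by linarith)]; linarith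
      have hg := tsum_choose_mul_geometric_of_norm_lt_one n hx
      have e1 : ∀ i : ℕ, ((i + n).choose n : K)
          * (c m * (θ ^ ((i + n + 1) * q ^ m))⁻¹) * z ^ i =
          (c m * ((θ ^ q ^ m) ^ (n + 1))⁻¹) * (((i + n).choose n : K) * (z / θ ^ q ^ m) ^ i) := by
        intro i
        rw [mul_comm (i + n + 1), pow_mul, add_assoc, pow_add, div_pow]
        field_simp
      simp only [e1, tsum_mul_left, hg]
      rw [one_sub_div hm, div_pow, one_div_div, mul_assoc]
      congr 1
      field_simp
end

section
/- Let 𝔭 ∈ F_q[θ] be monic irreducible of degree d and let n ≥ 0. Let g ∈ (F_q[θ])[T] be the unique polynomial with (θ − T)·g = 𝔭(θ) − 𝔭(T), where 𝔭(θ) is regarded as a constant polynomial in T and 𝔭(T) is 𝔭 with T substituted for θ. Let r_n ∈ (F_q[θ])[T] be the remainder of g^{n+1} upon division by the (T-)monic polynomial 𝔭(T), and write r_n = Σ_{l=0}^{d−1} q_{n,l}(θ) T^l with q_{n,l} ∈ F_q[θ]. Then the images of q_{n,0}, …, q_{n,d−1} in the quotient field F_q[θ]/(𝔭) form an F_q-basis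 of F_q[θ]/(𝔭) (an F_q-vector space of dimension d). -/
open Polynomial in
lemma core_span {F K : Type*} [Field F] [Field K] [Algebra F K] (P : F[X]) (d n : ℕ)
    (hm : P.Monic) (hd : P.natDegree = d) (hsep : P.Separable) (a : K)
    (hadj : Algebra.adjoin F {a} = ⊤) (G R : K[X])
    (hG : (X - C a) * G = P.map (algebraMap F K))
    (hR : R = G ^ (n + 1) %ₘ P.map (algebraMap F K)) :
    Submodule.span F (Set.range fun l : Fin d => R.coeff l) = ⊤ := by
  have hPm : (P.map (algebraMap F K)).Monic := hm.map _
  have hGm : G.Monic := by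
    have := hPm
    rw [← hG] at this
    exact (monic_X_sub_C a).of_mul_monic_left this
  have hdG : d = 1 + G.natDegree := by
    have h := (monic_X_sub_C a).natDegree_mul hGm
    rw [hG, hm.natDegree_map, natDegree_X_sub_C, hd] at h
    exact h
  -- coefficient span of G
  have hS : Submodule.span F (Set.range fun l : ℕ => G.coeff l) = ⊤ := by
    set S := Submodule.span F (Set.range fun l : ℕ => G.coeff l) with hSdef
    have hmem : ∀ l, G.coeff l ∈ S := fun l => Submodule.subset_span ⟨l, rfl⟩
    have h1 : (1 : K) ∈ S := by
      have := hmem G.natDegree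
      rwa [hGm.coeff_natDegree] at this
    have hF : ∀ x : F, algebraMap F K x ∈ S := fun x => by
      rw [Algebra.algebraMap_eq_smul_one]; exact S.smul_mem _ h1
    have hstep : ∀ l, a * G.coeff l ∈ S := by
      intro l
      have h := congrArg (fun q => coeff q l) hG
      simp only [sub_mul, coeff_sub, coeff_C_mul, coeff_map] at h
      have e : a * G.coeff l = (X * G).coeff l - algebraMap F K (P.coeff l) := by
        rw [← h]; ring
      rw [e]
      refine S.sub_mem ?_ (hF _)
      cases l with
      | zero => simp
      | succ l => rw [coeff_X_mul]; exact hmem l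
    have hclosed : ∀ x ∈ S, a * x ∈ S := by
      intro x hx
      have : S ≤ S.comap (LinearMap.mulLeft F a) := by
        rw [hSdef, Submodule.span_le]
        rintro _ ⟨l, rfl⟩
        exact hstep l
      exact this hx
    have hpow : ∀ k : ℕ, a ^ k ∈ S := by
      intro k
      induction k with
      | zero => simpa using h1
      | succ k ih => rw [pow_succ']; exact hclosed _ ih
    rw [eq_top_iff]
    intro x _
    have hx : x ∈ Algebra.adjoin F {a} := by rw [hadj]; trivial
    rw [Algebra.adjoin_singleton_eq_range_aeval] at hx
    obtain ⟨f, rfl⟩ := hx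
    change aeval a f ∈ S
    rw [aeval_eq_sum_range]
    exact S.sum_mem fun i _ => S.smul_mem _ (hpow i)
  have hGdvdR : G ∣ R := by
    have h := modByMonic_add_div (G ^ (n + 1)) (P.map (algebraMap F K))
    rw [← hR] at h
    have e : R = G ^ (n+1) - (X - C a) * G * (G ^ (n + 1) /ₘ P.map (algebraMap F K)) := by
      rw [hG]; exact eq_sub_of_add_eq h
    rw [e]
    exact dvd_sub (dvd_pow_self _ (by omega)) ⟨(X - C a) * (G ^ (n + 1) /ₘ P.map (algebraMap F K)), by ring⟩
  have hR0 : R ≠ 0 := by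
    intro h0
    rw [h0] at hR
    have hdv := (modByMonic_eq_zero_iff_dvd hPm).1 hR.symm
    have h1 : (X - C a) ∣ G ^ (n+1) := (Dvd.intro _ hG).trans hdv
    have h2 : (X - C a) ∣ G := (prime_X_sub_C a).dvd_of_dvd_pow h1
    obtain ⟨H, rfl⟩ := h2
    have hs : (P.map (algebraMap F K)).Separable := hsep.map
    have := hs.squarefree (X - C a) ⟨H, by rw [← hG]; ring⟩
    exact (prime_X_sub_C a).not_isUnit this
  obtain ⟨q, rfl⟩ := hGdvdR
  have hq0 : q ≠ 0 := right_ne_zero_of_mul hR0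
  have hRd : (G * q).natDegree < d := by
    rw [hR, ← hd, ← hm.natDegree_map (algebraMap F K)]
    refine natDegree_modByMonic_lt _ hPm ?_
    intro h
    have := hm.natDegree_map (algebraMap F K)
    rw [h, natDegree_one] at this
    omega
  have hqd : q.natDegree = 0 := by
    rw [hGm.natDegree_mul' hq0] at hRd
    omega
  obtain ⟨c, rfl⟩ := natDegree_eq_zero.1 hqd
  have hc : c ≠ 0 := by rintro rfl; simp at hq0
  have hle : Submodule.span F (Set.range fun l : ℕ => G.coeff l) ≤
      (Submodule.span F (Set.range fun l : Fin d => (G * C c).coeff l)).comap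
        (LinearMap.mulLeft F c) := by
    rw [Submodule.span_le]
    rintro _ ⟨l, rfl⟩
    change c * G.coeff l ∈ Submodule.span F (Set.range fun l : Fin d => (G * C c).coeff l)
    by_cases hl : l < d
    · refine Submodule.subset_span ⟨⟨l, hl⟩, ?_⟩
      simp [mul_comm]
    · rw [coeff_eq_zero_of_natDegree_lt (by omega), mul_zero]
      exact Submodule.zero_mem _
  rw [hS] at hle
  rw [eq_top_iff]
  intro x _
  have := hle (Submodule.mem_top (x := c⁻¹ * x))
  change c * (c⁻¹ * x) ∈ Submodule.span F (Set.range fun l : Fin d => (G * C c).coeff l) at this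
  rwa [mul_inv_cancel_left₀ hc] at this


/-- Let `P ∈ F_q[θ]` be monic irreducible of degree `d` and `n ≥ 0`.
Let `g ∈ (F_q[θ])[T]` be the unique polynomial with `(θ - T) * g = P(θ) - P(T)`, and let
`r` be the remainder of `g^(n+1)` upon division by the `T`-monic polynomial `P(T)`.
Then the images in `F_q[θ]/(P)` of the `T`-coefficients `r.coeff 0, …, r.coeff (d-1)` form
an `F_q`-basis of `F_q[θ]/(P)`. -/
theorem stmt10 (p e : ℕ) [Fact p.Prime] (he : e ≠ 0)
    (d n : ℕ) (P : Polynomial (GaloisField p e))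
    (hmonic : P.Monic) (hirr : Irreducible P) (hdeg : P.natDegree = d)
    (g : Polynomial (Polynomial (GaloisField p e)))
    (hg : (Polynomial.C (Polynomial.X : Polynomial (GaloisField p e)) -
          (Polynomial.X : Polynomial (Polynomial (GaloisField p e)))) * g
        = Polynomial.C P -
          P.map (Polynomial.C : GaloisField p e →+* Polynomial (GaloisField p e)))
    (r : Polynomial (Polynomial (GaloisField p e)))
    (hr : r = g ^ (n + 1) %ₘ
        P.map (Polynomial.C : GaloisField p e →+* Polynomial (GaloisField p e))) :
    LinearIndependent (GaloisField p e)
      (fun l : Fin d => Ideal.Quotient.mk (Ideal.span {P}) (r.coeff l)) ∧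
    Submodule.span (GaloisField p e)
      (Set.range fun l : Fin d => Ideal.Quotient.mk (Ideal.span {P}) (r.coeff l)) = ⊤ := by
  classical
  haveI : Fact (Irreducible P) := ⟨hirr⟩
  have key := core_span (F := GaloisField p e) (K := AdjoinRoot P) P d n hmonic hdeg
    (PerfectField.separable_of_irreducible hirr) (AdjoinRoot.root P)
    AdjoinRoot.adjoinRoot_eq_top (g.map (AdjoinRoot.mk P)) (r.map (AdjoinRoot.mk P))
    (by
      have h := congrArg (Polynomial.map (AdjoinRoot.mk P)) hg
      simp only [Polynomial.map_mul, Polynomial.map_sub, Polynomial.map_C, Polynomial.map_X,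
        AdjoinRoot.mk_self, AdjoinRoot.mk_X, Polynomial.map_map, map_zero, zero_sub] at h
      have e2 : (AdjoinRoot.mk P).comp Polynomial.C =
        algebraMap (GaloisField p e) (AdjoinRoot P) := rfl
      rw [e2] at h
      rw [← neg_sub, neg_mul, h, neg_neg])
    (by
      rw [hr, Polynomial.map_modByMonic _ (hmonic.map _), Polynomial.map_pow,
        Polynomial.map_map]
      rfl)
  simp only [Polynomial.coeff_map] at key
  have hfr : Module.finrank (GaloisField p e) (AdjoinRoot P) = d := by
    rw [(AdjoinRoot.powerBasis hirr.ne_zero).finrank, AdjoinRoot.powerBasis_dim, hdeg]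
  have hli := linearIndependent_of_top_le_span_of_card_eq_finrank
    (R := GaloisField p e) (M := AdjoinRoot P) key.ge (by rw [hfr, Fintype.card_fin])
  exact ⟨hli, key⟩
end

section
/- Let 𝔭 ∈ F_q[θ] be monic irreducible of degree d, n ≥ 0, let g ∈ (F_q[θ])[T] be the unique polynomial with (θ − T)·g = 𝔭(θ) − 𝔭(T), and let r_n be the remainder of g^{n+1} upon division by 𝔭(T). Let L be a field extension of F_q containing a root ζ of 𝔭. Then, evaluating the T-variable of r_n at ζ (giving an element r_n(θ, ζ) of L[θ]), one has (θ − ζ)^{n+1} · r_n(θ, ζ) = 𝔭(θ)^{n+1} in L[θ]; that is, r_n(θ, ζ) = (𝔭(θ)/(θ − ζ))^{n+1}. -/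
/-- With `P ∈ F_q[θ]` monic irreducible of degree `d`, `n ≥ 0`,
`g ∈ (F_q[θ])[T]` the unique polynomial with `(θ - T) * g = P(θ) - P(T)`, and `r` the
remainder of `g^(n+1)` modulo `P(T)`: if `L` is a field extension of `F_q` (via `φ`)
containing a root `ζ` of `P`, then evaluating the `T`-variable of `r` at `ζ` gives
`r(θ, ζ) ∈ L[θ]` with `(θ - ζ)^(n+1) * r(θ, ζ) = P(θ)^(n+1)` in `L[θ]`. -/
theorem stmt12 (p e : ℕ) [Fact p.Prime] (he : e ≠ 0)
    (d n : ℕ) (P : Polynomial (GaloisField p e))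
    (hmonic : P.Monic) (hirr : Irreducible P) (hdeg : P.natDegree = d)
    (g : Polynomial (Polynomial (GaloisField p e)))
    (hg : (Polynomial.C (Polynomial.X : Polynomial (GaloisField p e)) -
          (Polynomial.X : Polynomial (Polynomial (GaloisField p e)))) * g
        = Polynomial.C P -
          P.map (Polynomial.C : GaloisField p e →+* Polynomial (GaloisField p e)))
    (r : Polynomial (Polynomial (GaloisField p e)))
    (hr : r = g ^ (n + 1) %ₘ
        P.map (Polynomial.C : GaloisField p e →+* Polynomial (GaloisField p e)))
    (L : Type*) [Field L] (φ : GaloisField p e →+* L)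
    (ζ : L) (hζ : Polynomial.eval ζ (P.map φ) = 0) :
    (Polynomial.X - Polynomial.C ζ) ^ (n + 1)
        * Polynomial.eval (Polynomial.C ζ) (r.map (Polynomial.mapRingHom φ))
      = (P.map φ) ^ (n + 1) := by
  have hP : Polynomial.eval₂ (Polynomial.mapRingHom φ) (Polynomial.C ζ)
      (P.map (Polynomial.C : GaloisField p e →+* Polynomial (GaloisField p e))) = 0 := by
    rw [Polynomial.eval₂_map]
    have hc : (Polynomial.mapRingHom φ).comp
        (Polynomial.C : GaloisField p e →+* Polynomial (GaloisField p e))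
        = (Polynomial.C : L →+* Polynomial L).comp φ := by
      ext x
      simp
    rw [hc, ← Polynomial.hom_eval₂, ← Polynomial.eval_map, hζ, map_zero]
  have hm := Polynomial.modByMonic_add_div (g ^ (n + 1))
    (P.map (Polynomial.C : GaloisField p e →+* Polynomial (GaloisField p e)))
  have h1 := congrArg (Polynomial.eval₂ (Polynomial.mapRingHom φ) (Polynomial.C ζ)) hm
  have h2 := congrArg (Polynomial.eval₂ (Polynomial.mapRingHom φ) (Polynomial.C ζ)) hg
  rw [← hr, Polynomial.eval₂_add, Polynomial.eval₂_mul, hP, zero_mul, add_zero,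
    Polynomial.eval₂_pow] at h1
  rw [Polynomial.eval₂_mul, Polynomial.eval₂_sub, Polynomial.eval₂_sub, hP, sub_zero,
    Polynomial.eval₂_C, Polynomial.eval₂_C, Polynomial.eval₂_X] at h2
  simp only [Polynomial.coe_mapRingHom, Polynomial.map_X] at h2
  rw [Polynomial.eval_map, h1, ← mul_pow, h2]
end

section
/- Let K be a field complete with respect to a nontrivial nonarchimedean absolute value ‖·‖, let (c_i)_{i≥0} ⊆ K with c_i → 0, and let z ∈ K with ‖z‖ ≤ 1. If for every n ≥ 0 the value of the n-th hyperderivative at z vanishes, i.e. Σ'_{i≥n} C(i,n) c_i z^{i−n} = 0 for all n ≥ 0, then c_i = 0 for all i. Equivalently, the Taylor-expansion homomorphism D_z from the Tate algebra to K[[X]], h ↦ Σ_{n≥0} h^{(n)}(z) X^n, is injective. -/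
open Filter

/-- Let `K` be a field complete with respect to a nontrivial
nonarchimedean absolute value, `(c i)` a null sequence in `K` and `z ∈ K` with `‖z‖ ≤ 1`.
If the value at `z` of every hyperderivative vanishes, i.e.
`∑'_{i} C(i+n,n) c_{i+n} z^i = 0` for all `n ≥ 0`, then `c i = 0` for all `i`
(injectivity of the Taylor-expansion homomorphism on the Tate algebra). -/
theorem stmt16 (K : Type*) [NontriviallyNormedField K] [CompleteSpace K]
    [IsUltrametricDist K]
    (c : ℕ → K) (hc : Tendsto c atTop (nhds 0))
    (z : K) (hz : ‖z‖ ≤ 1)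
    (hvanish : ∀ n : ℕ, ∑' i : ℕ, ((i + n).choose n : K) * c (i + n) * z ^ i = 0) :
    ∀ i, c i = 0 := by
  intro j
  by_contra hj
  have hr : 0 < ‖c j‖ := norm_pos_iff.mpr hj
  have hc' : Tendsto (fun i => ‖c i‖) atTop (nhds 0) := by simpa using hc.norm
  obtain ⟨B, hB⟩ := eventually_atTop.mp (hc'.eventually_lt_const hr)
  -- the largest index `N` whose coefficient has norm at least `‖c j‖`
  obtain ⟨N, hN, hmax⟩ : ∃ N, ‖c j‖ ≤ ‖c N‖ ∧ ∀ i, N < i → ‖c i‖ < ‖c j‖ := by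
    classical
    have hjB : j ≤ B := by
      by_contra h
      exact lt_irrefl _ (hB j (by omega))
    refine ⟨Nat.findGreatest (fun i => ‖c j‖ ≤ ‖c i‖) B,
      Nat.findGreatest_spec (P := fun i => ‖c j‖ ≤ ‖c i‖) hjB le_rfl, fun i hi => ?_⟩
    by_cases h : i ≤ B
    · exact not_le.mp (Nat.findGreatest_is_greatest hi h)
    · exact hB i (by omega)
  have hle : ∀ i, ‖((i + N).choose N : K) * c (i + N) * z ^ i‖ ≤ ‖c (i + N)‖ := by
    intro i
    rw [norm_mul, norm_mul, norm_pow]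
    have h1 : ‖((i + N).choose N : K)‖ ≤ 1 := IsUltrametricDist.norm_natCast_le_one K _
    have h2 : ‖z‖ ^ i ≤ 1 := pow_le_one₀ (norm_nonneg _) hz
    calc _ ≤ 1 * ‖c (i + N)‖ * 1 := by gcongr
      _ = _ := by ring
  have hs : Summable (fun i => ((i + N).choose N : K) * c (i + N) * z ^ i) := by
    apply NonarchimedeanAddGroup.summable_of_tendsto_cofinite_zero
    rw [Nat.cofinite_eq_atTop]
    exact squeeze_zero_norm hle (hc'.comp (tendsto_add_atTop_nat N))
  have h0 := hvanish N
  rw [hs.tsum_eq_zero_add] at h0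
  have hs' := (summable_nat_add_iff 1).mpr hs
  have hmem := (IsUltrametricDist.isClosed_ball (0 : K) ‖c j‖).mem_of_tendsto hs'.hasSum
    (Eventually.of_forall fun s => by
      rw [mem_ball_zero_iff]
      induction s using Finset.cons_induction with
      | empty => simpa using hj
      | cons a s ha ih =>
        rw [Finset.sum_cons]
        exact (IsUltrametricDist.norm_add_le_max _ _).trans_lt
          (max_lt ((hle _).trans_lt (hmax _ (by omega))) ih))
  rw [mem_ball_zero_iff] at hmem
  have h3 := eq_neg_of_add_eq_zero_left h0
  simp only [zero_add, Nat.choose_self, Nat.cast_one, one_mul, pow_zero, mul_one] at h3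
  rw [h3, norm_neg] at hN
  exact absurd hmem (not_lt.mpr hN)
end
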